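/- Let X be a random vector with values in EuclideanSpace ℝ (Fin n) whose distribution is the multivariate Gaussian measure with mean vector μ and symmetric positive semidefinite covariance matrix C. Then there exists ε > 0 such that for all real t with |t| < ε, log(E[exp(t·‖X‖²)]) = ∑_{j=1}^∞ 2^(j−1)·(j−1)!·(trace(C^j) + j·⟪μ, C^(j−1) μ⟫)·t^j/j!, with the series converging. In particular, the j-th cumulant of ‖X‖² is 2^(j−1)·(j−1)!·(trace(C^j) + j·⟪μ, C^(j−1) μ⟫). -/

import Mathlib

open MeasureTheory ProbabilityTheory
open scoped RealInnerProductSpace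

/-- `X` is a random vector whose law is the multivariate Gaussian measure with mean `μ` and
covariance matrix `C`: every one-dimensional projection `⟪X, v⟫` is Gaussian with mean `⟪μ, v⟫`
and variance `⟪C v, v⟫`. -/
def IsMultivariateGaussian {Ω : Type*} [MeasurableSpace Ω] {n : ℕ}
    (P : Measure Ω) (X : Ω → EuclideanSpace ℝ (Fin n))
    (μ : EuclideanSpace ℝ (Fin n)) (C : Matrix (Fin n) (Fin n) ℝ) : Prop :=
  Measurable X ∧
    ∀ v : EuclideanSpace ℝ (Fin n),
      P.map (fun ω => ⟪X ω, v⟫) =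
        gaussianReal ⟪μ, v⟫ (⟪Matrix.toEuclideanLin C v, v⟫).toNNReal

/-!
Diagonalise the covariance operator in an orthonormal eigenbasis. The coordinates of `X` there are
jointly Gaussian and uncorrelated, hence independent, so the cumulant-generating function of `‖X‖²`
is the sum of those of the squared coordinates. A coordinate with mean `m` and variance `l`
contributes `-log (1 - 2 l t) / 2 + t m² / (1 - 2 l t)`, which the logarithmic and geometric series
expand for `|2 l t| < 1`; summed over the eigenbasis, `∑ l ^ j` becomes the trace of the `j`-th
power of the operator, and `∑ l ^ (j - 1) m²` the quadratic form of the `(j - 1)`-th at the mean.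
-/

section Gaussian

lemma gaussianPDFReal_mul_exp_mul_sq {v : NNReal} {t : ℝ} (hv : v ≠ 0) (hvt : 2 * v * t < 1)
    (m y : ℝ) :
    gaussianPDFReal m v y * Real.exp (t * y ^ 2) =
      (√(1 - 2 * v * t))⁻¹ * Real.exp (t * m ^ 2 / (1 - 2 * v * t)) *
        gaussianPDFReal (m / (1 - 2 * v * t)) (v / (1 - 2 * v * t)).toNNReal y := by
  have hd : 0 < 1 - 2 * v * t := sub_pos.2 hvt
  have h_sqrt : √(2 * Real.pi * (v / (1 - 2 * v * t))) =
      √(2 * Real.pi * v) / √(1 - 2 * v * t) := by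
    rw [← Real.sqrt_div (by positivity), mul_div_assoc]
  have h_complete_square : -(y - m) ^ 2 / (2 * v) + t * y ^ 2 =
      t * m ^ 2 / (1 - 2 * v * t) +
        -(y - m / (1 - 2 * v * t)) ^ 2 / (2 * (v / (1 - 2 * v * t))) := by
    have : (v : ℝ) ≠ 0 := NNReal.coe_ne_zero.2 hv
    field_simp
    ring
  rw [gaussianPDFReal, gaussianPDFReal, Real.coe_toNNReal _ (by positivity), h_sqrt, mul_assoc,
    ← Real.exp_add, h_complete_square, Real.exp_add]
  have : √(1 - 2 * v * t) ≠ 0 := by positivity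
  field_simp

lemma integral_exp_mul_sq_gaussianReal {v : NNReal} {t : ℝ} (hvt : 2 * v * t < 1) (m : ℝ) :
    ∫ y, Real.exp (t * y ^ 2) ∂gaussianReal m v =
      (√(1 - 2 * v * t))⁻¹ * Real.exp (t * m ^ 2 / (1 - 2 * v * t)) := by
  obtain rfl | hv := eq_or_ne v 0
  · simp
  have : 0 < 1 - 2 * v * t := sub_pos.2 hvt
  have hw : (v / (1 - 2 * v * t)).toNNReal ≠ 0 :=
    (Real.toNNReal_pos.2 (by positivity)).ne'
  simp only [integral_gaussianReal_eq_integral_smul hv, smul_eq_mul,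
    gaussianPDFReal_mul_exp_mul_sq hv hvt, integral_const_mul,
    integral_gaussianPDFReal_eq_one _ hw, mul_one]

variable {Ω : Type*} [MeasurableSpace Ω] {P : Measure Ω} {Y : Ω → ℝ} {m t : ℝ} {v : NNReal}

lemma mgf_sq_gaussianReal (hY : HasLaw Y (gaussianReal m v) P) (hvt : 2 * v * t < 1) :
    mgf (fun ω ↦ Y ω ^ 2) P t =
      (√(1 - 2 * v * t))⁻¹ * Real.exp (t * m ^ 2 / (1 - 2 * v * t)) := by
  rw [← integral_exp_mul_sq_gaussianReal hvt]
  exact hY.integral_comp (f := fun y ↦ Real.exp (t * y ^ 2)) (by fun_prop)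

lemma integrable_exp_mul_sq_gaussianReal (hY : HasLaw Y (gaussianReal m v) P)
    (hvt : 2 * v * t < 1) : Integrable (fun ω ↦ Real.exp (t * Y ω ^ 2)) P := by
  have := hY.isProbabilityMeasure
  have : 0 < 1 - 2 * v * t := sub_pos.2 hvt
  rw [← mgf_pos_iff, mgf_sq_gaussianReal hY hvt]
  positivity

lemma cgf_sq_gaussianReal (hY : HasLaw Y (gaussianReal m v) P) (hvt : 2 * v * t < 1) :
    cgf (fun ω ↦ Y ω ^ 2) P t =
      -Real.log (1 - 2 * v * t) / 2 + t * m ^ 2 / (1 - 2 * v * t) := by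
  have hd : 0 < 1 - 2 * v * t := sub_pos.2 hvt
  rw [cgf, mgf_sq_gaussianReal hY hvt, Real.log_mul (by positivity) (by positivity), Real.log_exp,
    Real.log_inv, Real.log_sqrt hd.le, neg_div]

lemma hasSum_cgf_sq_gaussianReal (hY : HasLaw Y (gaussianReal m v) P) (hvt : |2 * v * t| < 1) :
    HasSum (fun k : ℕ ↦ 2 ^ k * (k.factorial : ℝ) *
        ((v : ℝ) ^ (k + 1) + ((k : ℝ) + 1) * ((v : ℝ) ^ k * m ^ 2)) *
        t ^ (k + 1) / ((k + 1).factorial : ℝ))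
      (cgf (fun ω ↦ Y ω ^ 2) P t) := by
  have h_log := (Real.hasSum_pow_div_log_of_abs_lt_one hvt).div_const 2
  have h_geom := (hasSum_geometric_of_abs_lt_one hvt).mul_left (t * m ^ 2)
  rw [cgf_sq_gaussianReal hY (abs_lt.1 hvt).2, div_eq_mul_inv (t * m ^ 2)]
  refine (h_log.add h_geom).congr_fun fun k ↦ ?_
  rw [Nat.factorial_succ]
  push_cast
  field_simp
  ring

end Gaussian

section Spectral

open Module.End

variable {𝕜 E ι : Type*} [RCLike 𝕜] [NormedAddCommGroup E] [InnerProductSpace 𝕜 E] [Fintype ι]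
  {T : E →ₗ[𝕜] E} {b : OrthonormalBasis ι 𝕜 E} {l : ι → 𝕜}

lemma trace_pow_eq_sum_of_hasEigenvector (hb : ∀ i, HasEigenvector T (l i) (b i)) (k : ℕ) :
    LinearMap.trace 𝕜 E (T ^ k) = ∑ i, l i ^ k := by
  simp only [LinearMap.trace_eq_sum_inner _ b, (hb _).pow_apply, inner_smul_right,
    inner_self_eq_norm_sq_to_K, b.norm_eq_one, RCLike.ofReal_one, one_pow, mul_one]

lemma inner_pow_apply_eq_sum_of_hasEigenvector (hb : ∀ i, HasEigenvector T (l i) (b i)) (k : ℕ)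
    (x y : E) :
    inner 𝕜 x ((T ^ k) y) = ∑ i, l i ^ k * (inner 𝕜 x (b i) * inner 𝕜 (b i) y) := by
  conv_lhs => rw [← b.sum_repr' y]
  simp only [map_sum, map_smul, (hb _).pow_apply, inner_sum, inner_smul_right]
  exact Finset.sum_congr rfl fun i _ ↦ by ring

end Spectral

section InnerProductSpace

variable {Ω E ι : Type*} [MeasurableSpace Ω] {P : Measure Ω} {X : Ω → E}
  [NormedAddCommGroup E] [InnerProductSpace ℝ E]

lemma covariance_inner_of_variance_inner [IsFiniteMeasure P] (hX : MemLp X 2 P) {T : E →ₗ[ℝ] E}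
    (hT : T.IsSymmetric) (h_var : ∀ v, Var[fun ω ↦ ⟪v, X ω⟫; P] = ⟪T v, v⟫) (u v : E) :
    cov[fun ω ↦ ⟪u, X ω⟫, fun ω ↦ ⟪v, X ω⟫; P] = ⟪T u, v⟫ := by
  have h_symm : ⟪T v, u⟫ = ⟪T u, v⟫ := by rw [hT v u, real_inner_comm]
  have h_polar := h_var (u + v)
  simp only [map_add, inner_add_left, inner_add_right] at h_polar
  rw [variance_fun_add (hX.const_inner u) (hX.const_inner v), h_var, h_var, h_symm] at h_polar
  linarith

variable [MeasurableSpace E] [BorelSpace E]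

lemma hasLaw_inner_gaussianReal [CompleteSpace E] [SecondCountableTopology E]
    (hX : HasGaussianLaw X P) (v : E) :
    HasLaw (fun ω ↦ ⟪v, X ω⟫)
      (gaussianReal ⟪v, P[X]⟫ Var[fun ω ↦ ⟪v, X ω⟫; P].toNNReal) P where
  aemeasurable := hX.aemeasurable.const_inner
  map_eq := by
    rw [← integral_inner hX.integrable]
    exact (hX.map_fun (innerSL ℝ v)).map_eq_gaussianReal

lemma iIndepFun_inner_of_covariance_eq_zero [Finite ι] {b : ι → E} (hX : HasGaussianLaw X P)
    (hb : ∀ i j, i ≠ j → cov[fun ω ↦ ⟪b i, X ω⟫, fun ω ↦ ⟪b j, X ω⟫; P] = 0) :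
    iIndepFun (fun i ω ↦ ⟪b i, X ω⟫) P :=
  have := Fintype.ofFinite ι
  (hX.map_fun (.pi fun i ↦ innerSL ℝ (b i))).iIndepFun_of_covariance_eq_zero hb

lemma cgf_norm_sq_eq_sum_of_iIndepFun [Fintype ι] (b : OrthonormalBasis ι ℝ E)
    (hX : AEMeasurable X P) (h_indep : iIndepFun (fun i ω ↦ ⟪b i, X ω⟫) P) {t : ℝ}
    (h_int : ∀ i, Integrable (fun ω ↦ Real.exp (t * ⟪b i, X ω⟫ ^ 2)) P) :
    cgf (fun ω ↦ ‖X ω‖ ^ 2) P t = ∑ i, cgf (fun ω ↦ ⟪b i, X ω⟫ ^ 2) P t := by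
  have h_norm : (fun ω ↦ ‖X ω‖ ^ 2) = ∑ i, fun ω ↦ ⟪b i, X ω⟫ ^ 2 := by
    ext ω
    simp [← b.sum_sq_norm_inner_right (X ω)]
  have h_indep_sq : iIndepFun (fun i ω ↦ ⟪b i, X ω⟫ ^ 2) P :=
    h_indep.comp (fun _ y ↦ y ^ 2) fun _ ↦ by fun_prop
  rw [h_norm, h_indep_sq.cgf_sum₀ (by fun_prop) fun i _ ↦ h_int i]

lemma hasSum_cgf_norm_sq_of_hasEigenvector [Fintype ι] (hX : HasGaussianLaw X P) {T : E →ₗ[ℝ] E}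
    (hT : ∀ u v, cov[fun ω ↦ ⟪u, X ω⟫, fun ω ↦ ⟪v, X ω⟫; P] = ⟪T u, v⟫)
    {b : OrthonormalBasis ι ℝ E} {l : ι → ℝ}
    (hb : ∀ i, Module.End.HasEigenvector T (l i) (b i)) {t : ℝ} (ht : ∀ i, |2 * l i * t| < 1) :
    HasSum (fun k : ℕ ↦ 2 ^ k * (k.factorial : ℝ) *
        (LinearMap.trace ℝ E (T ^ (k + 1)) + ((k : ℝ) + 1) * ⟪P[X], (T ^ k) P[X]⟫) *
        t ^ (k + 1) / ((k + 1).factorial : ℝ))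
      (cgf (fun ω ↦ ‖X ω‖ ^ 2) P t) := by
  classical
  have := b.toBasis.finiteDimensional_of_finite
  have hT_basis i j : ⟪T (b i), b j⟫ = if i = j then l i else 0 := by
    rw [(hb i).apply_eq_smul, real_inner_smul_left, b.inner_eq_ite, mul_ite, mul_one, mul_zero]
  have h_var i : Var[fun ω ↦ ⟪b i, X ω⟫; P] = l i := by
    rw [← covariance_self hX.aemeasurable.const_inner, hT, hT_basis, if_pos rfl]
  have h_law i : HasLaw (fun ω ↦ ⟪b i, X ω⟫) (gaussianReal ⟪b i, P[X]⟫ (l i).toNNReal) P :=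
    h_var i ▸ hasLaw_inner_gaussianReal hX (b i)
  have h_coe i : ((l i).toNNReal : ℝ) = l i :=
    Real.coe_toNNReal _ (h_var i ▸ variance_nonneg _ _)
  have ht' i : |2 * ((l i).toNNReal : ℝ) * t| < 1 := by simpa only [h_coe] using ht i
  have h_indep : iIndepFun (fun i ω ↦ ⟪b i, X ω⟫) P :=
    iIndepFun_inner_of_covariance_eq_zero hX fun i j hij ↦ by rw [hT, hT_basis, if_neg hij]
  rw [cgf_norm_sq_eq_sum_of_iIndepFun b hX.aemeasurable h_indep fun i ↦
    integrable_exp_mul_sq_gaussianReal (h_law i) (abs_lt.1 (ht' i)).2]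
  refine (hasSum_sum fun i _ ↦ hasSum_cgf_sq_gaussianReal (h_law i) (ht' i)).congr_fun fun k ↦ ?_
  simp only [h_coe]
  rw [trace_pow_eq_sum_of_hasEigenvector hb, inner_pow_apply_eq_sum_of_hasEigenvector hb,
    Finset.mul_sum, ← Finset.sum_add_distrib, Finset.mul_sum, Finset.sum_mul, Finset.sum_div]
  refine Finset.sum_congr rfl fun i _ ↦ ?_
  rw [real_inner_comm (b i), ← sq]

theorem cgf_norm_sq_gaussian_general [FiniteDimensional ℝ E] (hX : HasGaussianLaw X P)
    {T : E →ₗ[ℝ] E}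
    (hT : ∀ u v, cov[fun ω ↦ ⟪u, X ω⟫, fun ω ↦ ⟪v, X ω⟫; P] = ⟪T u, v⟫) :
    ∃ ε > (0 : ℝ), ∀ t : ℝ, |t| < ε →
      HasSum (fun k : ℕ ↦ 2 ^ k * (k.factorial : ℝ) *
          (LinearMap.trace ℝ E (T ^ (k + 1)) + ((k : ℝ) + 1) * ⟪P[X], (T ^ k) P[X]⟫) *
          t ^ (k + 1) / ((k + 1).factorial : ℝ))
        (cgf (fun ω ↦ ‖X ω‖ ^ 2) P t) := by
  have h_symm : T.IsSymmetric := fun u v ↦ by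
    rw [← hT, covariance_comm, hT, real_inner_comm]
  have h_small : ∀ᶠ t in nhds (0 : ℝ), ∀ i, |2 * h_symm.eigenvalues rfl i * t| < 1 :=
    Filter.eventually_all.2 fun i ↦
      ContinuousAt.eventually_lt (by fun_prop) continuousAt_const (by simp)
  obtain ⟨ε, hε, h_ball⟩ := Metric.eventually_nhds_iff.1 h_small
  exact ⟨ε, hε, fun t ht ↦ hasSum_cgf_norm_sq_of_hasEigenvector hX hT
    (h_symm.hasEigenvector_eigenvectorBasis rfl) (h_ball (by simpa using ht))⟩

end InnerProductSpace

namespace IsMultivariateGaussian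

variable {Ω : Type*} [MeasurableSpace Ω] {n : ℕ} {P : Measure Ω}
  {X : Ω → EuclideanSpace ℝ (Fin n)} {μ : EuclideanSpace ℝ (Fin n)}
  {C : Matrix (Fin n) (Fin n) ℝ}

lemma hasLaw_inner (hX : IsMultivariateGaussian P X μ C) (v : EuclideanSpace ℝ (Fin n)) :
    HasLaw (fun ω ↦ ⟪v, X ω⟫)
      (gaussianReal ⟪v, μ⟫ (⟪Matrix.toEuclideanLin C v, v⟫).toNNReal) P where
  aemeasurable := hX.1.aemeasurable.const_inner
  map_eq := by simpa only [real_inner_comm v] using hX.2 v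

lemma hasGaussianLaw (hX : IsMultivariateGaussian P X μ C) : HasGaussianLaw X P where
  isGaussian_map := isGaussian_of_map_eq_gaussianReal fun L ↦ by
    obtain ⟨v, rfl⟩ := (InnerProductSpace.toDual ℝ _).surjective L
    refine ⟨⟪v, μ⟫, (⟪Matrix.toEuclideanLin C v, v⟫).toNNReal, ?_⟩
    rw [Measure.map_map (by fun_prop) hX.1]
    exact (hX.hasLaw_inner v).map_eq

lemma integral_eq (hX : IsMultivariateGaussian P X μ C) : P[X] = μ :=
  ext_inner_left ℝ fun v ↦ by
    rw [← integral_inner hX.hasGaussianLaw.integrable, (hX.hasLaw_inner v).integral_eq,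
      integral_id_gaussianReal]

lemma variance_inner (hX : IsMultivariateGaussian P X μ C) (hC : C.PosSemidef)
    (v : EuclideanSpace ℝ (Fin n)) :
    Var[fun ω ↦ ⟪v, X ω⟫; P] = ⟪Matrix.toEuclideanLin C v, v⟫ := by
  rw [(hX.hasLaw_inner v).variance_eq, variance_id_gaussianReal]
  exact Real.coe_toNNReal _ ((Matrix.isPositive_toEuclideanLin_iff.2 hC).re_inner_nonneg_left v)

lemma covariance_inner (hX : IsMultivariateGaussian P X μ C) (hC : C.PosSemidef)
    (u v : EuclideanSpace ℝ (Fin n)) :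
    cov[fun ω ↦ ⟪u, X ω⟫, fun ω ↦ ⟪v, X ω⟫; P] = ⟪Matrix.toEuclideanLin C u, v⟫ :=
  have := hX.hasGaussianLaw.isProbabilityMeasure
  covariance_inner_of_variance_inner hX.hasGaussianLaw.memLp_two
    (Matrix.isSymmetric_toEuclideanLin_iff.2 hC.1) (hX.variance_inner hC) u v

end IsMultivariateGaussian

lemma trace_toEuclideanLin {𝕜 ι : Type*} [RCLike 𝕜] [Fintype ι] [DecidableEq ι]
    (A : Matrix ι ι 𝕜) : LinearMap.trace 𝕜 _ (Matrix.toEuclideanLin A) = A.trace := by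
  rw [Matrix.toEuclideanLin_eq_toLin_orthonormal, Matrix.trace_toLin_eq]

theorem cgf_norm_sq_gaussian
    {Ω : Type*} [MeasurableSpace Ω] {n : ℕ}
    (P : Measure Ω) [IsProbabilityMeasure P]
    (X : Ω → EuclideanSpace ℝ (Fin n))
    (μ : EuclideanSpace ℝ (Fin n)) (C : Matrix (Fin n) (Fin n) ℝ)
    (hC : C.PosSemidef)
    (hX : IsMultivariateGaussian P X μ C) :
    ∃ ε > (0 : ℝ), ∀ t : ℝ, |t| < ε →
      HasSum
        (fun k : ℕ =>
          2 ^ k * (Nat.factorial k : ℝ) *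
            (Matrix.trace (C ^ (k + 1)) +
              ((k : ℝ) + 1) * ⟪μ, Matrix.toEuclideanLin (C ^ k) μ⟫) *
            t ^ (k + 1) / (Nat.factorial (k + 1) : ℝ))
        (Real.log (∫ ω, Real.exp (t * ‖X ω‖ ^ 2) ∂P)) := by
  simpa only [← Matrix.toLpLin_pow, trace_toEuclideanLin, hX.integral_eq] using!
    cgf_norm_sq_gaussian_general hX.hasGaussianLaw (hX.covariance_inner hC)
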